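/- Let ⟨ω₁, …, ω_d⟩ be a d-web of hypersurfaces on U with d ≥ n + 2, normalized so that ω_{n+1} = −(ω₁ + … + ω_n) and ω_{n+1+k} = −Σᵢ aᵏᵢ ωᵢ for k = 1, …, d − n − 1, where each aᵏᵢ is a smooth nonvanishing function and aᵏᵢ(x) ≠ aᵏⱼ(x) for all i ≠ j and x ∈ U. Then the web is geodesic for some torsion-free affine connection on U if and only if s^{aᵏ}_{ij} = s^{aˡ}_{ij} for all i ≠ j and all k, l ∈ {1, …, d − n − 1}. -/

import Mathlib

open scoped BigOperators

/-- Partial derivative in the `i`-th coordinate direction. -/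
noncomputable def pd {n : ℕ} (i : Fin n) (f : (Fin n → ℝ) → ℝ) (x : Fin n → ℝ) : ℝ :=
  fderiv ℝ f x (Pi.single i 1)

/-- A torsion-free affine connection on `U`, given by its Christoffel symbols `Γ k i j`
(smooth on `U` and symmetric in the lower indices `i j`). -/
def IsTorsionFreeConn {n : ℕ} (U : Set (Fin n → ℝ))
    (Γ : Fin n → Fin n → Fin n → (Fin n → ℝ) → ℝ) : Prop :=
  (∀ k i j, ContDiffOn ℝ (⊤ : ℕ∞) (Γ k i j) U) ∧ (∀ k i j x, Γ k i j x = Γ k j i x)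

/-- `γ` is a geodesic of `Γ` on the set `I ⊆ ℝ`, with image in `U`. -/
def IsGeodesicOn {n : ℕ} (U : Set (Fin n → ℝ))
    (Γ : Fin n → Fin n → Fin n → (Fin n → ℝ) → ℝ)
    (I : Set ℝ) (γ : ℝ → Fin n → ℝ) : Prop :=
  (∀ t ∈ I, γ t ∈ U) ∧ ContDiffOn ℝ 2 γ I ∧
    ∀ t ∈ I, ∀ k, deriv (fun s => deriv (fun u => γ u k) s) t +
      ∑ i, ∑ j, Γ k i j (γ t) * deriv (fun u => γ u i) t * deriv (fun u => γ u j) t = 0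

/-- The codimension-one foliation defined by the `1`-form `ω` is totally geodesic for `Γ`:
every geodesic tangent to a leaf at time `0` stays tangent to the kernel of `ω`. -/
def TotallyGeodesic {n : ℕ} (U : Set (Fin n → ℝ))
    (Γ : Fin n → Fin n → Fin n → (Fin n → ℝ) → ℝ)
    (ω : (Fin n → ℝ) → Fin n → ℝ) : Prop :=
  ∀ I : Set ℝ, IsOpen I → I.OrdConnected → (0 : ℝ) ∈ I →
    ∀ γ : ℝ → Fin n → ℝ, IsGeodesicOn U Γ I γ →
      (∑ k, ω (γ 0) k * deriv (fun u => γ u k) 0) = 0 →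
      ∀ t ∈ I, (∑ k, ω (γ t) k * deriv (fun u => γ u k) t) = 0

/-- `ω` is a smooth nonvanishing `1`-form on `U` satisfying the integrability
condition `ω ∧ dω = 0`. -/
def IsFoliationForm {n : ℕ} (U : Set (Fin n → ℝ)) (ω : (Fin n → ℝ) → Fin n → ℝ) : Prop :=
  ContDiffOn ℝ (⊤ : ℕ∞) ω U ∧ (∀ x ∈ U, ω x ≠ 0) ∧
    ∀ x ∈ U, ∀ i j k,
      ω x i * (pd j (fun y => ω y k) x - pd k (fun y => ω y j) x) +
      ω x j * (pd k (fun y => ω y i) x - pd i (fun y => ω y k) x) +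
      ω x k * (pd i (fun y => ω y j) x - pd j (fun y => ω y i) x) = 0

/-- Components of the symmetric covariant differential `d^s_Γ ω`. -/
noncomputable def dsym {n : ℕ} (Γ : Fin n → Fin n → Fin n → (Fin n → ℝ) → ℝ)
    (ω : (Fin n → ℝ) → Fin n → ℝ) (i j : Fin n) (x : Fin n → ℝ) : ℝ :=
  (pd i (fun y => ω y j) x + pd j (fun y => ω y i) x) / 2 - ∑ k, Γ k i j x * ω x k

/-- Components of the symmetric product `θ·ω` of two `1`-forms. -/
noncomputable def symProd {n : ℕ} (θ ω : (Fin n → ℝ) → Fin n → ℝ) (i j : Fin n) (x : Fin n → ℝ) : ℝ :=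
  (θ x i * ω x j + θ x j * ω x i) / 2

/-- A `d`-web of hypersurfaces on `U`: a family of smooth nonvanishing integrable `1`-forms,
any `n` of which are linearly independent at every point of `U`. -/
def IsWeb {n d : ℕ} (U : Set (Fin n → ℝ)) (ωs : Fin d → (Fin n → ℝ) → Fin n → ℝ) : Prop :=
  (∀ i, IsFoliationForm U (ωs i)) ∧
    ∀ x ∈ U, ∀ σ : Fin n → Fin d, Function.Injective σ →
      LinearIndependent ℝ (fun i => ωs (σ i) x)

/-- `Γ` and `Γ'` are projectively equivalent on `U`:
`Γ'ᵏᵢⱼ = Γᵏᵢⱼ + δᵏᵢ ρⱼ + δᵏⱼ ρᵢ` for some smooth `1`-form `ρ`. -/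
def ProjEquiv {n : ℕ} (U : Set (Fin n → ℝ))
    (Γ Γ' : Fin n → Fin n → Fin n → (Fin n → ℝ) → ℝ) : Prop :=
  ∃ ρ : (Fin n → ℝ) → Fin n → ℝ, ContDiffOn ℝ (⊤ : ℕ∞) ρ U ∧
    ∀ x ∈ U, ∀ k i j, Γ' k i j x =
      Γ k i j x + (if k = i then ρ x j else 0) + (if k = j then ρ x i else 0)

/-- `X` is the frame of vector fields dual to the coframe `ωs` on `U`. -/
def IsDualFrame {n : ℕ} (U : Set (Fin n → ℝ)) (ωs : Fin n → (Fin n → ℝ) → Fin n → ℝ)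
    (X : Fin n → (Fin n → ℝ) → Fin n → ℝ) : Prop :=
  (∀ i, ContDiffOn ℝ (⊤ : ℕ∞) (X i) U) ∧
    ∀ x ∈ U, ∀ i j, (∑ k, ωs i x k * X j x k) = if i = j then 1 else 0

/-- The web invariants `s^a_{ij} = (1/(aᵢ−aⱼ))·(aᵢ ∂ⱼ − aⱼ ∂ᵢ) log (aⱼ/aᵢ)`, where `∂ᵢ`
is derivation along the frame vector field `X i`. -/
noncomputable def sInv {n : ℕ} (X : Fin n → (Fin n → ℝ) → Fin n → ℝ)
    (a : Fin n → (Fin n → ℝ) → ℝ) (i j : Fin n) (x : Fin n → ℝ) : ℝ :=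
  (1 / (a i x - a j x)) *
    (a i x * (fderiv ℝ (a j) x (X j x) / a j x - fderiv ℝ (a i) x (X j x) / a i x) -
     a j x * (fderiv ℝ (a j) x (X i x) / a j x - fderiv ℝ (a i) x (X i x) / a i x))

/-- The curvature tensor `Rᵏₗᵢⱼ` of the connection `Γ`. -/
noncomputable def curv {n : ℕ} (Γ : Fin n → Fin n → Fin n → (Fin n → ℝ) → ℝ)
    (k l i j : Fin n) (x : Fin n → ℝ) : ℝ :=
  pd i (Γ k j l) x - pd j (Γ k i l) x +
    ∑ m, (Γ k i m x * Γ m j l x - Γ k j m x * Γ m i l x)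

/-!
The foliation of `ω` is totally geodesic exactly when `d^s_Γ ω = θ·ω` for some `1`-form `θ`:
along a geodesic `γ` the derivative of `ω(γ')` is `(d^s_Γ ω)(γ', γ')`, so that `ω(γ')` solves a
homogeneous linear equation. For the coframe `η` this reads `d^s_Γ ηₘ = ηₘ · ∑ⱼ Sₘⱼ ηⱼ`. By the
Leibniz rule, the relation for `∑ᵢ bᵢ ηᵢ` then becomes
`bᵢ (Sᵢⱼ - Sⱼⱼ) + bⱼ (Sⱼᵢ - Sᵢᵢ) = bᵢ ∂ⱼ log (bⱼ / bᵢ) - bⱼ ∂ᵢ log (bⱼ / bᵢ)`.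
Taking `b = 1` shows that `Tᵢⱼ = Sᵢⱼ - Sⱼⱼ` is antisymmetric, and `b = a` then says
`Tᵢⱼ = s^a_{ij}`. Thus the invariants of all `aᵏ` are the same `T`; conversely, when they agree,
taking their common value for `S` determines `Γ`.
-/

theorem forall_fin_iff_castLE_and_add {n d : ℕ} (h : n < d) {P : Fin d → Prop} :
    (∀ i, P i) ↔ (∀ i : Fin n, P (Fin.castLE h.le i)) ∧ P ⟨n, h⟩ ∧
      ∀ k : Fin (d - n - 1), P ⟨n + 1 + k, by omega⟩ := by
  refine ⟨fun hP => ⟨fun _ => hP _, hP _, fun _ => hP _⟩, fun ⟨hlt, heq, hgt⟩ i => ?_⟩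
  obtain hi | hi | hi := lt_trichotomy i.val n
  · exact hlt ⟨i, hi⟩
  · exact (Fin.ext hi : i = ⟨n, h⟩) ▸ heq
  · have hik : i = ⟨n + 1 + (i.val - n - 1), by omega⟩ := Fin.ext (by simp only; omega)
    exact hik ▸ hgt ⟨i.val - n - 1, by omega⟩

section BilinearAlgebra

open Matrix

variable {K ι : Type*} [Field K] [Fintype ι]

theorem exists_dual_forall_self_eq_mul {V : Type*} [AddCommGroup V] [Module K V]
    (B : LinearMap.BilinForm K V) (f : Module.Dual K V) (h : ∀ v, f v = 0 → B v v = 0) :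
    ∃ g : Module.Dual K V, ∀ v, B v v = f v * g v := by
  by_cases hf : f = 0
  · exact ⟨0, fun v => by simp [hf, h]⟩
  obtain ⟨N, hN⟩ : ∃ N, f N = 1 := LinearMap.surjective hf 1
  refine ⟨B N + B.flip N - B N N • f, fun v => ?_⟩
  have hproj : B (v - f v • N) (v - f v • N) = 0 := h _ (by simp [hN])
  simp only [map_sub, map_smul, LinearMap.sub_apply, LinearMap.add_apply, LinearMap.smul_apply,
    LinearMap.BilinForm.flip_apply, smul_eq_mul] at hproj ⊢
  linear_combination hproj

theorem add_swap_eq_of_forall_dotProduct_eq_zero (M : Matrix ι ι K) {b : ι → K} (hb : ∀ i, b i ≠ 0)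
    (h : ∀ c, b ⬝ᵥ c = 0 → c ⬝ᵥ M *ᵥ c = 0) (i j : ι) :
    M i j + M j i = b i * (M j j / b j) + b j * (M i i / b i) := by
  classical
  have hc := h (b j • Pi.single i 1 - b i • Pi.single j 1) (by
    simp [dotProduct_sub, dotProduct_smul, mul_comm])
  simp only [mulVec_sub, mulVec_smul, sub_dotProduct, dotProduct_sub, smul_dotProduct,
    dotProduct_smul, mulVec_single_one, single_one_dotProduct, col_apply, smul_eq_mul] at hc
  have hi := hb i
  have hj := hb j
  field_simp
  linear_combination -hc

theorem sum_sum_eq_zero_of_alternating {R : Type*} [AddCommMonoid R] {F : ι → ι → R}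
    (hdiag : ∀ i, F i i = 0) (hF : ∀ i j, F i j + F j i = 0) : ∑ i, ∑ j, F i j = 0 := by
  rw [← Fintype.sum_prod_type']
  refine Finset.sum_involution (fun p _ => p.swap) (fun p _ => hF p.1 p.2) (fun p _ hp hswap => ?_)
    (fun _ _ => Finset.mem_univ _) fun p _ => p.swap_swap
  obtain ⟨i, j⟩ := p
  obtain rfl : j = i := congrArg Prod.fst hswap
  exact hp (hdiag j)

theorem dotProduct_mulVec_self_of_add_swap_eq (M : Matrix ι ι K) {b : ι → K} (hb : ∀ i, b i ≠ 0)
    (h : ∀ i j, M i j + M j i = b i * (M j j / b j) + b j * (M i i / b i)) (c : ι → K) :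
    c ⬝ᵥ M *ᵥ c = (b ⬝ᵥ c) * ∑ j, M j j / b j * c j := by
  have halt : ∑ i, ∑ j, (M i j - b i * (M j j / b j)) * (c i * c j) = 0 :=
    sum_sum_eq_zero_of_alternating (fun i => by rw [mul_div_cancel₀ _ (hb i)]; ring)
      fun i j => by linear_combination c i * c j * h i j
  rw [← sub_eq_zero, ← halt]
  simp only [dotProduct, mulVec, Finset.sum_mul_sum]
  simp only [Finset.mul_sum, ← Finset.sum_sub_distrib]
  exact Finset.sum_congr rfl fun i _ => Finset.sum_congr rfl fun j _ => by ring

end BilinearAlgebra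

theorem eq_zero_of_hasDerivAt_smul {E : Type*} [NormedAddCommGroup E] [NormedSpace ℝ E]
    {I : Set ℝ} (hI : IsOpen I) (hconn : I.OrdConnected) {t₀ : ℝ} (ht₀ : t₀ ∈ I)
    {f : ℝ → E} {g : ℝ → ℝ} (hg : ContinuousOn g I)
    (hf : ∀ t ∈ I, HasDerivAt f (g t • f t) t) (hf₀ : f t₀ = 0) : ∀ t ∈ I, f t = 0 := by
  have hG : ∀ t ∈ I, HasDerivAt (fun u => ∫ s in t₀..u, g s) (g t) t := fun t ht =>
    intervalIntegral.integral_hasDerivAt_right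
      (hg.mono (hconn.uIcc_subset ht₀ ht)).intervalIntegrable
      (hg.stronglyMeasurableAtFilter hI t ht) (hg.continuousAt (hI.mem_nhds ht))
  have hderiv : ∀ t ∈ I, HasDerivAt (fun u => Real.exp (-∫ s in t₀..u, g s) • f u) 0 t :=
    fun t ht => ((hG t ht).neg.exp.smul (hf t ht)).congr_deriv (by module)
  intro t ht
  have hconst := hI.is_const_of_deriv_eq_zero hconn.isPreconnected
    (fun u hu => (hderiv u hu).differentiableAt.differentiableWithinAt)
    (fun u hu => (hderiv u hu).deriv) ht ht₀
  simpa [hf₀] using hconst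

theorem contDiffOn_two_of_hasDerivAt {E : Type*} [NormedAddCommGroup E] [NormedSpace ℝ E]
    {I : Set ℝ} (hI : IsOpen I) {γ γ' γ'' : ℝ → E} (hγ : ∀ t ∈ I, HasDerivAt γ (γ' t) t)
    (hγ' : ∀ t ∈ I, HasDerivAt γ' (γ'' t) t) (hγ'' : ContinuousOn γ'' I) :
    ContDiffOn ℝ 2 γ I := by
  have hγ'1 : ContDiffOn ℝ (0 + 1) γ' I := (contDiffOn_succ_iff_deriv_of_isOpen hI).2
    ⟨fun t ht => (hγ' t ht).differentiableAt.differentiableWithinAt, by simp,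
      contDiffOn_zero.2 (hγ''.congr fun t ht => (hγ' t ht).deriv)⟩
  rw [zero_add] at hγ'1
  rw [← one_add_one_eq_two]
  exact (contDiffOn_succ_iff_deriv_of_isOpen hI).2
    ⟨fun t ht => (hγ t ht).differentiableAt.differentiableWithinAt, by simp,
      hγ'1.congr fun t ht => (hγ t ht).deriv⟩

theorem exists_hasDerivAt_second_order {E : Type*} [NormedAddCommGroup E] [NormedSpace ℝ E]
    [CompleteSpace E] {F : E × E → E} {U : Set E} (hU : IsOpen U)
    (hF : ∀ p : E × E, p.1 ∈ U → ContDiffAt ℝ 1 F p) {x : E} (hx : x ∈ U) (v : E) :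
    ∃ ε > 0, ∃ γ γ' : ℝ → E, γ 0 = x ∧ γ' 0 = v ∧ ∀ t ∈ Metric.ball (0 : ℝ) ε, γ t ∈ U ∧
      HasDerivAt γ (γ' t) t ∧ HasDerivAt γ' (F (γ t, γ' t)) t := by
  obtain ⟨α, hα₀, ε, hε, hα⟩ :=
    (contDiffAt_snd.prodMk (hF (x, v) hx)
      ).exists_forall_mem_closedBall_exists_eq_forall_mem_Ioo_hasDerivAt₀ 0
  rw [← Real.ball_eq_Ioo] at hα
  have hnear : ∀ᶠ t in nhds (0 : ℝ), (α t).1 ∈ U :=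
    (continuous_fst.continuousAt.comp
      (hα 0 (Metric.mem_ball_self hε)).continuousAt).eventually_mem
      (by simpa [hα₀] using hU.mem_nhds hx)
  obtain ⟨δ, hδ, hball⟩ := Metric.eventually_nhds_iff_ball.1 hnear
  refine ⟨min ε δ, lt_min hε hδ, fun t => (α t).1, fun t => (α t).2, by simp [hα₀],
    by simp [hα₀], fun t ht => ?_⟩
  have hαt := hα t (Metric.ball_subset_ball (min_le_left ε δ) ht)
  exact ⟨hball t (Metric.ball_subset_ball (min_le_right ε δ) ht), hαt.fst, hαt.snd⟩

section SymmetricDifferential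

open Matrix

variable {n : ℕ} {U : Set (Fin n → ℝ)} {Γ : Fin n → Fin n → Fin n → (Fin n → ℝ) → ℝ}
  {ω θ : (Fin n → ℝ) → Fin n → ℝ} {x : Fin n → ℝ}

/-- The symmetric covariant differential `d^s_Γ ω` at `x` as a bilinear form on tangent vectors;
its matrix in the standard basis is `dsym Γ ω`. -/
noncomputable def dsymForm (Γ : Fin n → Fin n → Fin n → (Fin n → ℝ) → ℝ)
    (ω : (Fin n → ℝ) → Fin n → ℝ) (x : Fin n → ℝ) : LinearMap.BilinForm ℝ (Fin n → ℝ) :=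
  Matrix.toBilin' (Matrix.of fun i j => dsym Γ ω i j x)

theorem fderiv_apply_eq_sum_pd (f : (Fin n → ℝ) → ℝ) (x v : Fin n → ℝ) :
    fderiv ℝ f x v = ∑ i, v i * pd i f x := by
  conv_lhs => rw [pi_eq_sum_univ' v]
  simp only [map_sum, map_smul, smul_eq_mul, pd]

theorem sum_sum_symmetrize_mul {ι : Type*} [Fintype ι] (A : ι → ι → ℝ) (v : ι → ℝ) :
    ∑ i, ∑ j, v i * ((A i j + A j i) / 2) * v j = ∑ i, ∑ j, v i * A i j * v j := by
  have hswap : ∑ i, ∑ j, v i * A i j * v j = ∑ i, ∑ j, v j * A j i * v i := Finset.sum_comm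
  rw [← add_self_div_two (∑ i, ∑ j, v i * A i j * v j)]
  nth_rw 2 [hswap]
  simp only [← Finset.sum_add_distrib, Finset.sum_div]
  exact Finset.sum_congr rfl fun i _ => Finset.sum_congr rfl fun j _ => by ring

theorem dsymForm_self (Γ : Fin n → Fin n → Fin n → (Fin n → ℝ) → ℝ)
    (ω : (Fin n → ℝ) → Fin n → ℝ) (x v : Fin n → ℝ) :
    dsymForm Γ ω x v v = ∑ k, (fderiv ℝ (fun y => ω y k) x v * v k -
      ω x k * ∑ i, ∑ j, Γ k i j x * v i * v j) := by
  have hpd : ∑ k, fderiv ℝ (fun y => ω y k) x v * v k =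
      ∑ i, ∑ j, v i * pd i (fun y => ω y j) x * v j := by
    simp only [fderiv_apply_eq_sum_pd, Finset.sum_mul]
    exact Finset.sum_comm
  have hΓ : ∑ k, ω x k * ∑ i, ∑ j, Γ k i j x * v i * v j =
      ∑ i, ∑ j, v i * (∑ k, Γ k i j x * ω x k) * v j := by
    simp only [Finset.mul_sum, Finset.sum_mul]
    rw [Finset.sum_comm]
    refine Finset.sum_congr rfl fun i _ => Finset.sum_comm.trans ?_
    exact Finset.sum_congr rfl fun j _ => Finset.sum_congr rfl fun k _ => by ring
  rw [Finset.sum_sub_distrib, hpd, hΓ, ← sum_sum_symmetrize_mul]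
  simp only [dsymForm, Matrix.toBilin'_apply, Matrix.of_apply, dsym, mul_sub, sub_mul,
    Finset.sum_sub_distrib]

theorem dsymForm_self_of_dsym_eq_symProd (h : ∀ i j, dsym Γ ω i j x = symProd θ ω i j x)
    (v : Fin n → ℝ) : dsymForm Γ ω x v v = (ω x ⬝ᵥ v) * (θ x ⬝ᵥ v) := by
  simp only [dsymForm, Matrix.toBilin'_apply, Matrix.of_apply, h, symProd]
  rw [mul_comm, dotProduct, dotProduct, Finset.sum_mul_sum]
  refine (sum_sum_symmetrize_mul (fun i j => θ x i * ω x j) v).trans ?_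
  exact Finset.sum_congr rfl fun i _ => Finset.sum_congr rfl fun j _ => by ring

end SymmetricDifferential

section Geodesics

open Matrix

variable {n : ℕ} {U : Set (Fin n → ℝ)} {Γ : Fin n → Fin n → Fin n → (Fin n → ℝ) → ℝ}
  {ω θ : (Fin n → ℝ) → Fin n → ℝ} {x : Fin n → ℝ}

theorem exists_isGeodesicOn (hU : IsOpen U) (hΓ : ∀ k i j, ContDiffOn ℝ 1 (Γ k i j) U)
    (hx : x ∈ U) (v : Fin n → ℝ) :
    ∃ ε > 0, ∃ γ : ℝ → Fin n → ℝ, IsGeodesicOn U Γ (Metric.ball 0 ε) γ ∧ γ 0 = x ∧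
      ∀ k, deriv (fun u => γ u k) 0 = v k := by
  let F : (Fin n → ℝ) × (Fin n → ℝ) → Fin n → ℝ := fun p k =>
    -∑ i, ∑ j, Γ k i j p.1 * p.2 i * p.2 j
  have hF : ∀ p : (Fin n → ℝ) × (Fin n → ℝ), p.1 ∈ U → ContDiffAt ℝ 1 F p := fun p hp => by
    have hΓp : ∀ k i j, ContDiffAt ℝ 1 (fun q : (Fin n → ℝ) × (Fin n → ℝ) => Γ k i j q.1) p :=
      fun k i j => ((hΓ k i j).contDiffAt (hU.mem_nhds hp)).comp p contDiffAt_fst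
    have hvel : ∀ i, ContDiffAt ℝ 1 (fun q : (Fin n → ℝ) × (Fin n → ℝ) => q.2 i) p :=
      contDiffAt_pi.1 contDiffAt_snd
    exact contDiffAt_pi.2 fun k => (ContDiffAt.sum fun i _ =>
      ContDiffAt.sum fun j _ => ((hΓp k i j).mul (hvel i)).mul (hvel j)).neg
  obtain ⟨ε, hε, γ, γ', hγ₀, hγ'₀, hγ⟩ := exists_hasDerivAt_second_order hU hF hx v
  have hvel : ∀ t ∈ Metric.ball (0 : ℝ) ε, ∀ k, deriv (fun u => γ u k) t = γ' t k :=
    fun t ht k => (hasDerivAt_pi.1 (hγ t ht).2.1 k).deriv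
  have hacc : ContinuousOn (fun t => F (γ t, γ' t)) (Metric.ball 0 ε) := fun t ht =>
    ((hF (γ t, γ' t) (hγ t ht).1).continuousAt.comp (x := t) (f := fun s => (γ s, γ' s))
      ((hγ t ht).2.1.continuousAt.prodMk (hγ t ht).2.2.continuousAt)).continuousWithinAt
  refine ⟨ε, hε, γ, ⟨fun t ht => (hγ t ht).1, contDiffOn_two_of_hasDerivAt Metric.isOpen_ball
    (fun t ht => (hγ t ht).2.1) (fun t ht => (hγ t ht).2.2) hacc, fun t ht k => ?_⟩, hγ₀,
    fun k => by rw [hvel 0 (Metric.mem_ball_self hε) k, hγ'₀]⟩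
  have hvel_near : (fun s => deriv (fun u => γ u k) s) =ᶠ[nhds t] fun s => γ' s k :=
    Filter.eventually_of_mem (Metric.isOpen_ball.mem_nhds ht) fun s hs => hvel s hs k
  rw [hvel_near.deriv_eq, (hasDerivAt_pi.1 (hγ t ht).2.2 k).deriv]
  simp only [hvel t ht, F, neg_add_cancel]

theorem IsGeodesicOn.hasDerivAt_pairing (hU : IsOpen U) (hω : ContDiffOn ℝ 1 ω U) {I : Set ℝ}
    (hI : IsOpen I) {γ : ℝ → Fin n → ℝ} (hγ : IsGeodesicOn U Γ I γ) {t : ℝ} (ht : t ∈ I) :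
    HasDerivAt (fun s => ∑ k, ω (γ s) k * deriv (fun u => γ u k) s)
      (dsymForm Γ ω (γ t) (fun k => deriv (fun u => γ u k) t)
        (fun k => deriv (fun u => γ u k) t)) t := by
  obtain ⟨hγU, hγ2, hgeo⟩ := hγ
  have hcoord : ∀ k, ContDiffOn ℝ (1 + 1) (fun u => γ u k) I := by
    rw [one_add_one_eq_two]
    exact contDiffOn_pi.1 hγ2
  have hvel : HasDerivAt γ (fun k => deriv (fun u => γ u k) t) t := hasDerivAt_pi.2 fun k =>
    (((hcoord k).differentiableOn (by simp)).differentiableAt (hI.mem_nhds ht)).hasDerivAt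
  have hacc : ∀ k, HasDerivAt (deriv (fun u => γ u k))
      (deriv (fun s => deriv (fun u => γ u k) s) t) t := fun k =>
    ((((contDiffOn_succ_iff_deriv_of_isOpen hI).1 (hcoord k)).2.2.differentiableOn
      one_ne_zero).differentiableAt (hI.mem_nhds ht)).hasDerivAt
  have hωγ : ∀ k, HasDerivAt (fun s => ω (γ s) k)
      (fderiv ℝ (fun y => ω y k) (γ t) (fun k => deriv (fun u => γ u k) t)) t := fun k =>
    (((contDiffOn_pi.1 hω k).differentiableOn one_ne_zero).differentiableAt
      (hU.mem_nhds (hγU t ht))).hasFDerivAt.comp_hasDerivAt t hvel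
  refine (HasDerivAt.fun_sum fun k _ => (hωγ k).mul (hacc k)).congr_deriv ?_
  rw [dsymForm_self]
  refine Finset.sum_congr rfl fun k _ => ?_
  rw [eq_neg_of_add_eq_zero_left (hgeo t ht k)]
  ring

theorem TotallyGeodesic.dsymForm_self_eq_zero (hU : IsOpen U)
    (hΓ : ∀ k i j, ContDiffOn ℝ 1 (Γ k i j) U) (hω : ContDiffOn ℝ 1 ω U)
    (h : TotallyGeodesic U Γ ω) (hx : x ∈ U) {v : Fin n → ℝ} (hv : ω x ⬝ᵥ v = 0) :
    dsymForm Γ ω x v v = 0 := by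
  obtain ⟨ε, hε, γ, hγ, rfl, hvel⟩ := exists_isGeodesicOn hU hΓ hx v
  have h0 : (0 : ℝ) ∈ Metric.ball (0 : ℝ) ε := Metric.mem_ball_self hε
  have htangent := h _ Metric.isOpen_ball (by rw [Real.ball_eq_Ioo]; exact Set.ordConnected_Ioo)
    h0 γ hγ (by simpa only [hvel, dotProduct] using hv)
  have hderiv := hγ.hasDerivAt_pairing hU hω Metric.isOpen_ball h0
  simp only [hvel] at hderiv
  exact hderiv.unique ((hasDerivAt_const (0 : ℝ) (0 : ℝ)).congr_of_eventuallyEq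
    (Filter.eventually_of_mem (Metric.isOpen_ball.mem_nhds h0) htangent))

theorem totallyGeodesic_of_dsymForm_self_eq (hU : IsOpen U) (hω : ContDiffOn ℝ 1 ω U)
    (hθ : ContinuousOn θ U)
    (h : ∀ x ∈ U, ∀ v, dsymForm Γ ω x v v = (ω x ⬝ᵥ v) * (θ x ⬝ᵥ v)) :
    TotallyGeodesic U Γ ω := by
  intro I hI hconn h0 γ hγ htangent
  have hvel : ∀ k, ContinuousOn (deriv (fun u => γ u k)) I := fun k =>
    (contDiffOn_pi.1 hγ.2.1 k).continuousOn_deriv_of_isOpen hI one_le_two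
  have hθγ : ContinuousOn (fun t => θ (γ t)) I := hθ.comp hγ.2.1.continuousOn hγ.1
  refine eq_zero_of_hasDerivAt_smul hI hconn h0
    (g := fun t => ∑ k, θ (γ t) k * deriv (fun u => γ u k) t)
    (continuousOn_finsetSum _ fun k _ => (continuousOn_pi.1 hθγ k).mul (hvel k))
    (fun t ht => ?_) htangent
  exact (hγ.hasDerivAt_pairing hU hω hI ht).congr_deriv
    ((h (γ t) (hγ.1 t ht) _).trans (mul_comm _ _))

theorem totallyGeodesic_congr_neg {ω' : (Fin n → ℝ) → Fin n → ℝ}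
    (h : ∀ x ∈ U, ∀ m, ω' x m = -ω x m) : TotallyGeodesic U Γ ω' ↔ TotallyGeodesic U Γ ω := by
  have hpair : ∀ x ∈ U, ∀ v : Fin n → ℝ, ∑ k, ω' x k * v k = 0 ↔ ∑ k, ω x k * v k = 0 :=
    fun x hx v => by simp only [h x hx, neg_mul, Finset.sum_neg_distrib, neg_eq_zero]
  refine forall_congr' fun I => forall₃_congr fun _ _ h0 => forall₂_congr fun γ hγ => ?_
  exact imp_congr (hpair _ (hγ.1 0 h0) _) (forall₂_congr fun t ht => hpair _ (hγ.1 t ht) _)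

end Geodesics

section Coframe

open Matrix

variable {n : ℕ} {U : Set (Fin n → ℝ)} {Γ : Fin n → Fin n → Fin n → (Fin n → ℝ) → ℝ}
  {η X : Fin n → (Fin n → ℝ) → Fin n → ℝ} {x : Fin n → ℝ}

theorem IsDualFrame.sum_dotProduct_smul_eq (hX : IsDualFrame U η X) (hx : x ∈ U) (v : Fin n → ℝ) :
    ∑ i, (η i x ⬝ᵥ v) • X i x = v := by
  have hinv : (Matrix.of fun i => η i x) * (Matrix.of fun i => X i x)ᵀ = 1 := by
    ext i j
    rw [Matrix.mul_apply, Matrix.one_apply]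
    exact hX.2 x hx i j
  calc ∑ i, (η i x ⬝ᵥ v) • X i x
      = (Matrix.of fun i => X i x)ᵀ *ᵥ ((Matrix.of fun i => η i x) *ᵥ v) := by
        ext k; simp [Matrix.mulVec, dotProduct, mul_comm]
    _ = v := by rw [Matrix.mulVec_mulVec, mul_eq_one_comm.1 hinv, Matrix.one_mulVec]

theorem IsDualFrame.apply_eq_sum (hX : IsDualFrame U η X) (hx : x ∈ U) (f : (Fin n → ℝ) →ₗ[ℝ] ℝ)
    (v : Fin n → ℝ) : f v = ∑ j, f (X j x) * (η j x ⬝ᵥ v) := by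
  conv_lhs => rw [← hX.sum_dotProduct_smul_eq hx v]
  simp only [map_sum, map_smul, smul_eq_mul, mul_comm]

/-- The linear combination `∑ᵢ bᵢ ηᵢ` of `1`-forms with function coefficients. -/
def coframeComb (η : Fin n → (Fin n → ℝ) → Fin n → ℝ) (b : Fin n → (Fin n → ℝ) → ℝ)
    (x : Fin n → ℝ) : Fin n → ℝ :=
  ∑ i, b i x • η i x

theorem coframeComb_dotProduct (η : Fin n → (Fin n → ℝ) → Fin n → ℝ)
    (b : Fin n → (Fin n → ℝ) → ℝ) (x v : Fin n → ℝ) :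
    coframeComb η b x ⬝ᵥ v = ∑ i, b i x * (η i x ⬝ᵥ v) := by
  simp only [coframeComb, sum_dotProduct, smul_dotProduct, smul_eq_mul]

theorem contDiffOn_coframeComb {r : WithTop ℕ∞} (hη : ∀ i, ContDiffOn ℝ r (η i) U)
    {b : Fin n → (Fin n → ℝ) → ℝ} (hb : ∀ i, ContDiffOn ℝ r (b i) U) :
    ContDiffOn ℝ r (coframeComb η b) U :=
  ContDiffOn.sum fun i _ => (hb i).smul (hη i)

theorem dsymForm_coframeComb_self (hη : ∀ i, DifferentiableAt ℝ (η i) x)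
    {b : Fin n → (Fin n → ℝ) → ℝ} (hb : ∀ i, DifferentiableAt ℝ (b i) x) (v : Fin n → ℝ) :
    dsymForm Γ (coframeComb η b) x v v =
      ∑ i, (b i x * dsymForm Γ (η i) x v v + fderiv ℝ (b i) x v * (η i x ⬝ᵥ v)) := by
  have hfderiv : ∀ k, fderiv ℝ (fun y => coframeComb η b y k) x v =
      ∑ i, (b i x * fderiv ℝ (fun y => η i y k) x v + fderiv ℝ (b i) x v * η i x k) := fun k => by
    have hcoord : (fun y => coframeComb η b y k) = fun y => ∑ i, b i y * η i y k := by
      ext y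
      simp only [coframeComb, Finset.sum_apply, Pi.smul_apply, smul_eq_mul]
    have hsum : HasFDerivAt (fun y => ∑ i, b i y * η i y k)
        (∑ i, (b i x • fderiv ℝ (fun y => η i y k) x + η i x k • fderiv ℝ (b i) x)) x :=
      HasFDerivAt.fun_sum fun i _ =>
        (hb i).hasFDerivAt.mul (differentiableAt_pi.1 (hη i) k).hasFDerivAt
    simp only [hcoord, hsum.fderiv, _root_.sum_apply, _root_.add_apply, _root_.smul_apply,
      smul_eq_mul, mul_comm (η _ x k)]
  -- `q` hides the Christoffel sums from the distributivity rewrites below.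
  obtain ⟨q, hq⟩ : ∃ q : Fin n → ℝ, ∀ k, ∑ i, ∑ j, Γ k i j x * v i * v j = q k :=
    ⟨_, fun _ => rfl⟩
  simp only [dsymForm_self, hfderiv, hq]
  simp only [coframeComb, Finset.sum_apply, Pi.smul_apply, smul_eq_mul, dotProduct, Finset.sum_mul,
    Finset.mul_sum, ← Finset.sum_sub_distrib, ← Finset.sum_add_distrib]
  rw [Finset.sum_comm]
  exact Finset.sum_congr rfl fun i _ => Finset.sum_congr rfl fun k _ => by ring

theorem contDiffOn_pd (hU : IsOpen U) {f : (Fin n → ℝ) → ℝ} (hf : ContDiffOn ℝ (⊤ : ℕ∞) f U)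
    (i : Fin n) : ContDiffOn ℝ (⊤ : ℕ∞) (pd i f) U :=
  (hf.fderiv_of_isOpen hU (by simp)).clm_apply contDiffOn_const

theorem IsDualFrame.exists_isTorsionFreeConn_dsym_eq (hU : IsOpen U) (hX : IsDualFrame U η X)
    (hη : ∀ i, ContDiffOn ℝ (⊤ : ℕ∞) (η i) U) {T : Fin n → Fin n → Fin n → (Fin n → ℝ) → ℝ}
    (hT : ∀ m i j, ContDiffOn ℝ (⊤ : ℕ∞) (T m i j) U) (hsymm : ∀ m i j x, T m i j x = T m j i x) :
    ∃ Γ, IsTorsionFreeConn U Γ ∧ ∀ x ∈ U, ∀ m i j, dsym Γ (η m) i j x = T m i j x := by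
  let D : Fin n → Fin n → Fin n → (Fin n → ℝ) → ℝ := fun m i j x =>
    (pd i (fun y => η m y j) x + pd j (fun y => η m y i) x) / 2 - T m i j x
  have hD : ∀ m i j, ContDiffOn ℝ (⊤ : ℕ∞) (D m i j) U := fun m i j =>
    (((contDiffOn_pd hU (contDiffOn_pi.1 (hη m) j) i).add
      (contDiffOn_pd hU (contDiffOn_pi.1 (hη m) i) j)).div_const 2).sub (hT m i j)
  refine ⟨fun k i j x => ∑ p, X p x k * D p i j x,
    ⟨fun k i j => ContDiffOn.sum fun p _ => (contDiffOn_pi.1 (hX.1 p) k).mul (hD p i j),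
      fun k i j x => ?_⟩, fun x hx m i j => ?_⟩
  · simp only [D, hsymm _ i j, add_comm (pd i _ x)]
  · have hcontract : ∑ k, (∑ p, X p x k * D p i j x) * η m x k = D m i j x := by
      calc _ = ∑ p, (∑ k, η m x k * X p x k) * D p i j x := by
            simp only [Finset.sum_mul]
            rw [Finset.sum_comm]
            exact Finset.sum_congr rfl fun p _ => Finset.sum_congr rfl fun k _ => by ring
        _ = D m i j x := by simp only [hX.2 x hx, ite_mul, one_mul, zero_mul, Finset.sum_ite_eq,
            Finset.mem_univ, if_true]
    rw [dsym, hcontract, sub_sub_cancel]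

end Coframe

section WebInvariants

open Matrix

variable {n : ℕ} {U : Set (Fin n → ℝ)} {Γ : Fin n → Fin n → Fin n → (Fin n → ℝ) → ℝ}
  {η X : Fin n → (Fin n → ℝ) → Fin n → ℝ} {x : Fin n → ℝ}

/-- The matrix `S` describes `d^s_Γ` on a coframe `η` with totally geodesic foliations at `x`:
`(d^s_Γ ηₘ)(v, v) = ηₘ(v) · ∑ⱼ Sₘⱼ ηⱼ(v)`. -/
def HasGeodesicSymbols (Γ : Fin n → Fin n → Fin n → (Fin n → ℝ) → ℝ)
    (η : Fin n → (Fin n → ℝ) → Fin n → ℝ) (x : Fin n → ℝ) (S : Fin n → Fin n → ℝ) : Prop :=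
  ∀ m v, dsymForm Γ (η m) x v v = (η m x ⬝ᵥ v) * ∑ j, S m j * (η j x ⬝ᵥ v)

/-- `bᵢ ∂ⱼ log (bⱼ / bᵢ) - bⱼ ∂ᵢ log (bⱼ / bᵢ)`, the numerator of `sInv X b i j`. -/
noncomputable def crossLogDeriv (X : Fin n → (Fin n → ℝ) → Fin n → ℝ)
    (b : Fin n → (Fin n → ℝ) → ℝ) (i j : Fin n) (x : Fin n → ℝ) : ℝ :=
  b i x * (fderiv ℝ (b j) x (X j x) / b j x - fderiv ℝ (b i) x (X j x) / b i x) -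
    b j x * (fderiv ℝ (b j) x (X i x) / b j x - fderiv ℝ (b i) x (X i x) / b i x)

theorem sInv_eq_crossLogDeriv_div (X : Fin n → (Fin n → ℝ) → Fin n → ℝ)
    (b : Fin n → (Fin n → ℝ) → ℝ) (i j : Fin n) (x : Fin n → ℝ) :
    sInv X b i j x = crossLogDeriv X b i j x / (b i x - b j x) :=
  one_div_mul_eq_div _ _

theorem crossLogDeriv_const (X : Fin n → (Fin n → ℝ) → Fin n → ℝ) (c : Fin n → ℝ) (i j : Fin n)
    (x : Fin n → ℝ) : crossLogDeriv X (fun i _ => c i) i j x = 0 := by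
  simp [crossLogDeriv]

theorem sInv_self (X : Fin n → (Fin n → ℝ) → Fin n → ℝ) (b : Fin n → (Fin n → ℝ) → ℝ) (i : Fin n)
    (x : Fin n → ℝ) : sInv X b i i x = 0 := by
  simp [sInv]

theorem sInv_swap (X : Fin n → (Fin n → ℝ) → Fin n → ℝ) (b : Fin n → (Fin n → ℝ) → ℝ) (i j : Fin n)
    (x : Fin n → ℝ) : sInv X b j i x = -sInv X b i j x := by
  rw [sInv_eq_crossLogDeriv_div, sInv_eq_crossLogDeriv_div, ← div_neg, neg_sub]
  congr 1
  rw [crossLogDeriv, crossLogDeriv]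
  ring

theorem contDiffOn_sInv (hU : IsOpen U) (hX : ∀ i, ContDiffOn ℝ (⊤ : ℕ∞) (X i) U)
    {b : Fin n → (Fin n → ℝ) → ℝ} (hb : ∀ i, ContDiffOn ℝ (⊤ : ℕ∞) (b i) U)
    (hb₀ : ∀ i, ∀ x ∈ U, b i x ≠ 0) (hne : ∀ i j, i ≠ j → ∀ x ∈ U, b i x ≠ b j x) (i j : Fin n) :
    ContDiffOn ℝ (⊤ : ℕ∞) (sInv X b i j) U := by
  obtain rfl | hij := eq_or_ne i j
  · exact contDiffOn_const.congr fun x _ => sInv_self X b i x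
  have hlog : ∀ p q, ContDiffOn ℝ (⊤ : ℕ∞) (fun x => fderiv ℝ (b p) x (X q x) / b p x) U :=
    fun p q => (((hb p).fderiv_of_isOpen hU (by simp)).clm_apply (hX q)).div (hb p) (hb₀ p)
  exact (contDiffOn_const.div ((hb i).sub (hb j)) fun x hx => sub_ne_zero.2 (hne i j hij x hx)).mul
    (((hb i).mul ((hlog j j).sub (hlog i j))).sub ((hb j).mul ((hlog j i).sub (hlog i i))))

theorem IsDualFrame.exists_hasGeodesicSymbols (hX : IsDualFrame U η X) (hx : x ∈ U)
    (h : ∀ m v, η m x ⬝ᵥ v = 0 → dsymForm Γ (η m) x v v = 0) :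
    ∃ S, HasGeodesicSymbols Γ η x S := by
  choose g hg using fun m =>
    exists_dual_forall_self_eq_mul (dsymForm Γ (η m) x) (dotProductEquiv ℝ (Fin n) (η m x)) (h m)
  refine ⟨fun m j => g m (X j x), fun m v => ?_⟩
  rw [hg m v, hX.apply_eq_sum hx (g m) v, dotProductEquiv_apply_apply]

theorem IsDualFrame.exists_isTorsionFreeConn_hasGeodesicSymbols (hU : IsOpen U)
    (hX : IsDualFrame U η X) (hη : ∀ i, ContDiffOn ℝ (⊤ : ℕ∞) (η i) U)
    {S : Fin n → Fin n → (Fin n → ℝ) → ℝ} (hS : ∀ i j, ContDiffOn ℝ (⊤ : ℕ∞) (S i j) U) :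
    ∃ Γ, IsTorsionFreeConn U Γ ∧ ∀ x ∈ U, HasGeodesicSymbols Γ η x fun i j => S i j x := by
  have hθ : ∀ m k, ContDiffOn ℝ (⊤ : ℕ∞) (fun x => coframeComb η (S m) x k) U := fun m =>
    contDiffOn_pi.1 (contDiffOn_coframeComb hη (hS m))
  have hηk : ∀ m k, ContDiffOn ℝ (⊤ : ℕ∞) (fun x => η m x k) U := fun m => contDiffOn_pi.1 (hη m)
  obtain ⟨Γ, hΓ, hdsym⟩ := hX.exists_isTorsionFreeConn_dsym_eq hU hη
    (T := fun m => symProd (coframeComb η (S m)) (η m))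
    (fun m i j => (((hθ m i).mul (hηk m j)).add ((hθ m j).mul (hηk m i))).div_const 2)
    (fun m i j x => by simp only [symProd, add_comm])
  refine ⟨Γ, hΓ, fun x hx m v => ?_⟩
  rw [dsymForm_self_of_dsym_eq_symProd (hdsym x hx m), coframeComb_dotProduct]

/-- The coefficients in the frame `X` of the quadratic form `(d^s_Γ ω)(v, v)` of `ω = ∑ᵢ bᵢ ηᵢ`
at `x`, for a connection with symbols `S`. -/
noncomputable def combMatrix (X : Fin n → (Fin n → ℝ) → Fin n → ℝ) (b : Fin n → (Fin n → ℝ) → ℝ)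
    (S : Fin n → Fin n → ℝ) (x : Fin n → ℝ) : Matrix (Fin n) (Fin n) ℝ :=
  Matrix.of fun i j => b i x * S i j + fderiv ℝ (b i) x (X j x)

theorem HasGeodesicSymbols.dsymForm_coframeComb_self_eq {S : Fin n → Fin n → ℝ}
    (hS : HasGeodesicSymbols Γ η x S) (hX : IsDualFrame U η X) (hx : x ∈ U)
    (hη : ∀ i, DifferentiableAt ℝ (η i) x) {b : Fin n → (Fin n → ℝ) → ℝ}
    (hb : ∀ i, DifferentiableAt ℝ (b i) x) (v : Fin n → ℝ) :
    dsymForm Γ (coframeComb η b) x v v =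
      (fun i => η i x ⬝ᵥ v) ⬝ᵥ combMatrix X b S x *ᵥ fun i => η i x ⬝ᵥ v := by
  have hdb : ∀ i, fderiv ℝ (b i) x v = ∑ j, fderiv ℝ (b i) x (X j x) * (η j x ⬝ᵥ v) := fun i =>
    hX.apply_eq_sum hx (fderiv ℝ (b i) x).toLinearMap v
  have hrow : ∀ i, (combMatrix X b S x *ᵥ fun j => η j x ⬝ᵥ v) i =
      b i x * ∑ j, S i j * (η j x ⬝ᵥ v) + fderiv ℝ (b i) x v := fun i => by
    calc _ = ∑ j, (b i x * S i j + fderiv ℝ (b i) x (X j x)) * (η j x ⬝ᵥ v) := rfl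
      _ = _ := by simp only [add_mul, mul_assoc, Finset.sum_add_distrib, ← Finset.mul_sum, hdb]
  rw [dsymForm_coframeComb_self hη hb]
  exact Finset.sum_congr rfl fun i _ => by rw [hS i v, hrow]; ring

theorem combMatrix_add_swap_eq_iff {b : Fin n → (Fin n → ℝ) → ℝ} (hb₀ : ∀ i, b i x ≠ 0)
    (S : Fin n → Fin n → ℝ) (i j : Fin n) :
    combMatrix X b S x i j + combMatrix X b S x j i =
        b i x * (combMatrix X b S x j j / b j x) + b j x * (combMatrix X b S x i i / b i x) ↔
      b i x * (S i j - S j j) + b j x * (S j i - S i i) = crossLogDeriv X b i j x := by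
  have hi := hb₀ i
  have hj := hb₀ j
  simp only [combMatrix, of_apply, crossLogDeriv]
  rw [← sub_eq_zero, ← sub_eq_zero (a := b i x * (S i j - S j j) + _)]
  refine Eq.congr_left ?_
  field_simp
  ring

theorem HasGeodesicSymbols.eq_crossLogDeriv {S : Fin n → Fin n → ℝ}
    (hS : HasGeodesicSymbols Γ η x S) (hX : IsDualFrame U η X) (hx : x ∈ U)
    (hη : ∀ i, DifferentiableAt ℝ (η i) x) {b : Fin n → (Fin n → ℝ) → ℝ}
    (hb : ∀ i, DifferentiableAt ℝ (b i) x) (hb₀ : ∀ i, b i x ≠ 0)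
    (h : ∀ v, coframeComb η b x ⬝ᵥ v = 0 → dsymForm Γ (coframeComb η b) x v v = 0) (i j : Fin n) :
    b i x * (S i j - S j j) + b j x * (S j i - S i i) = crossLogDeriv X b i j x := by
  refine (combMatrix_add_swap_eq_iff hb₀ S i j).1
    (add_swap_eq_of_forall_dotProduct_eq_zero _ hb₀ (fun c hc => ?_) i j)
  have hdual : ∀ m k, η m x ⬝ᵥ X k x = if m = k then 1 else 0 := hX.2 x hx
  have hcoord : ∀ m, η m x ⬝ᵥ ∑ k, c k • X k x = c m := fun m => by
    simp [dotProduct_sum, dotProduct_smul, hdual]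
  have hv := h (∑ k, c k • X k x)
  rw [hS.dsymForm_coframeComb_self_eq hX hx hη hb, coframeComb_dotProduct] at hv
  simp only [hcoord] at hv
  exact hv hc

theorem totallyGeodesic_coframeComb_of_eq_crossLogDeriv (hU : IsOpen U) (hX : IsDualFrame U η X)
    (hη : ∀ i, ContDiffOn ℝ 1 (η i) U) {S : Fin n → Fin n → (Fin n → ℝ) → ℝ}
    (hSc : ∀ i, ContinuousOn (S i i) U) (hS : ∀ x ∈ U, HasGeodesicSymbols Γ η x fun i j => S i j x)
    {b : Fin n → (Fin n → ℝ) → ℝ} (hb : ∀ i, ContDiffOn ℝ 1 (b i) U)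
    (hb₀ : ∀ i, ∀ x ∈ U, b i x ≠ 0)
    (h : ∀ x ∈ U, ∀ i j, b i x * (S i j x - S j j x) + b j x * (S j i x - S i i x) =
      crossLogDeriv X b i j x) :
    TotallyGeodesic U Γ (coframeComb η b) := by
  have hρ : ∀ j, ContinuousOn
      (fun x => combMatrix X b (fun i j => S i j x) x j j / b j x) U := fun j =>
    (((hb j).continuousOn.mul (hSc j)).add (((hb j).continuousOn_fderiv_of_isOpen hU le_rfl
      ).clm_apply (hX.1 j).continuousOn)).div (hb j).continuousOn (hb₀ j)
  refine totallyGeodesic_of_dsymForm_self_eq hU (contDiffOn_coframeComb hη hb)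
    (θ := coframeComb η fun j x => combMatrix X b (fun i j => S i j x) x j j / b j x)
    (continuousOn_finsetSum _ fun j _ => (hρ j).smul (hη j).continuousOn) fun x hx v => ?_
  have hdiff : ∀ {F : Type} [NormedAddCommGroup F] [NormedSpace ℝ F] {f : (Fin n → ℝ) → F},
      ContDiffOn ℝ 1 f U → DifferentiableAt ℝ f x := fun hf =>
    (hf.differentiableOn one_ne_zero).differentiableAt (hU.mem_nhds hx)
  rw [(hS x hx).dsymForm_coframeComb_self_eq hX hx (fun i => hdiff (hη i)) fun i => hdiff (hb i),
    dotProduct_mulVec_self_of_add_swap_eq _ (fun i => hb₀ i x hx) fun i j =>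
      (combMatrix_add_swap_eq_iff (fun i => hb₀ i x hx) _ i j).2 (h x hx i j),
    coframeComb_dotProduct, coframeComb_dotProduct]
  rfl

end WebInvariants

section GeodesicWebs

open Matrix

variable {n : ℕ} {U : Set (Fin n → ℝ)} {Γ : Fin n → Fin n → Fin n → (Fin n → ℝ) → ℝ}
  {η X : Fin n → (Fin n → ℝ) → Fin n → ℝ} {κ : Type*} {a : κ → Fin n → (Fin n → ℝ) → ℝ}

theorem sInv_eq_of_totallyGeodesic (hU : IsOpen U) (hη : ∀ i, ContDiffOn ℝ 1 (η i) U)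
    (hX : IsDualFrame U η X) {b : Fin n → (Fin n → ℝ) → ℝ} (hb : ∀ i, ContDiffOn ℝ 1 (b i) U)
    (hb₀ : ∀ i, ∀ x ∈ U, b i x ≠ 0) (hΓ : ∀ k i j, ContDiffOn ℝ 1 (Γ k i j) U)
    (hsum : TotallyGeodesic U Γ (coframeComb η fun _ _ => 1))
    (hcomb : TotallyGeodesic U Γ (coframeComb η b)) {x : Fin n → ℝ} (hx : x ∈ U)
    {S : Fin n → Fin n → ℝ} (hS : HasGeodesicSymbols Γ η x S) {i j : Fin n}
    (hne : b i x ≠ b j x) : sInv X b i j x = S i j - S j j := by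
  have hηx : ∀ m, DifferentiableAt ℝ (η m) x := fun m =>
    ((hη m).differentiableOn one_ne_zero).differentiableAt (hU.mem_nhds hx)
  have hbx : ∀ m, DifferentiableAt ℝ (b m) x := fun m =>
    ((hb m).differentiableOn one_ne_zero).differentiableAt (hU.mem_nhds hx)
  have hsum_rel := hS.eq_crossLogDeriv hX hx hηx (fun _ => differentiableAt_const _)
    (fun _ => one_ne_zero) (fun _ => hsum.dsymForm_self_eq_zero hU hΓ
      (contDiffOn_coframeComb hη fun _ => contDiffOn_const) hx) i j
  rw [crossLogDeriv_const X fun _ => 1] at hsum_rel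
  have hcomb_rel := hS.eq_crossLogDeriv hX hx hηx hbx (fun m => hb₀ m x hx)
    (fun _ => hcomb.dsymForm_self_eq_zero hU hΓ (contDiffOn_coframeComb hη hb) hx) i j
  rw [sInv_eq_crossLogDeriv_div, ← hcomb_rel, div_eq_iff (sub_ne_zero.2 hne)]
  linear_combination b j x * hsum_rel

theorem exists_alternating_eq_sInv (hU : IsOpen U) (hX : ∀ i, ContDiffOn ℝ (⊤ : ℕ∞) (X i) U)
    (ha : ∀ k i, ContDiffOn ℝ (⊤ : ℕ∞) (a k i) U) (ha₀ : ∀ k i, ∀ x ∈ U, a k i x ≠ 0)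
    (hne : ∀ k i j, i ≠ j → ∀ x ∈ U, a k i x ≠ a k j x)
    (h : ∀ k l i j, i ≠ j → ∀ x ∈ U, sInv X (a k) i j x = sInv X (a l) i j x) :
    ∃ S : Fin n → Fin n → (Fin n → ℝ) → ℝ, (∀ i j, ContDiffOn ℝ (⊤ : ℕ∞) (S i j) U) ∧
      (∀ i x, S i i x = 0) ∧ (∀ i j x, S j i x = -S i j x) ∧
      ∀ k, ∀ x ∈ U, ∀ i j, sInv X (a k) i j x = S i j x := by
  obtain hκ | ⟨⟨k₀⟩⟩ := isEmpty_or_nonempty κ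
  · exact ⟨fun _ _ _ => 0, fun _ _ => contDiffOn_const, fun _ _ => rfl, fun _ _ _ => neg_zero.symm,
      fun k => hκ.elim k⟩
  refine ⟨sInv X (a k₀), contDiffOn_sInv hU hX (ha k₀) (ha₀ k₀) (hne k₀), sInv_self X (a k₀),
    sInv_swap X (a k₀), fun k x hx i j => ?_⟩
  obtain rfl | hij := eq_or_ne i j
  · rw [sInv_self, sInv_self]
  · exact h k k₀ i j hij x hx

theorem exists_isTorsionFreeConn_totallyGeodesic (hU : IsOpen U)
    (hη : ∀ i, ContDiffOn ℝ (⊤ : ℕ∞) (η i) U) (hX : IsDualFrame U η X)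
    (ha : ∀ k i, ContDiffOn ℝ 1 (a k i) U) (ha₀ : ∀ k i, ∀ x ∈ U, a k i x ≠ 0)
    (hne : ∀ k i j, i ≠ j → ∀ x ∈ U, a k i x ≠ a k j x)
    {S : Fin n → Fin n → (Fin n → ℝ) → ℝ} (hS : ∀ i j, ContDiffOn ℝ (⊤ : ℕ∞) (S i j) U)
    (hdiag : ∀ i x, S i i x = 0) (hswap : ∀ i j x, S j i x = -S i j x)
    (h : ∀ k, ∀ x ∈ U, ∀ i j, sInv X (a k) i j x = S i j x) :
    ∃ Γ, IsTorsionFreeConn U Γ ∧ (∀ i, TotallyGeodesic U Γ (η i)) ∧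
      TotallyGeodesic U Γ (coframeComb η fun _ _ => 1) ∧
      ∀ k, TotallyGeodesic U Γ (coframeComb η (a k)) := by
  obtain ⟨Γ, hΓ, hsymb⟩ := hX.exists_isTorsionFreeConn_hasGeodesicSymbols hU hη hS
  have hη1 : ∀ i, ContDiffOn ℝ 1 (η i) U := fun i => (hη i).of_le (by exact_mod_cast le_top)
  have hcomb : ∀ {b : Fin n → (Fin n → ℝ) → ℝ}, (∀ i, ContDiffOn ℝ 1 (b i) U) →
      (∀ i, ∀ x ∈ U, b i x ≠ 0) →
      (∀ x ∈ U, ∀ i j, b i x * S i j x + b j x * S j i x = crossLogDeriv X b i j x) →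
      TotallyGeodesic U Γ (coframeComb η b) := fun hb hb₀ hrel =>
    totallyGeodesic_coframeComb_of_eq_crossLogDeriv hU hX hη1 (fun i => (hS i i).continuousOn)
      hsymb hb hb₀ fun x hx i j => by simpa only [hdiag, sub_zero] using hrel x hx i j
  refine ⟨Γ, hΓ, fun m => ?_, hcomb (fun _ => contDiffOn_const) (fun _ _ _ => one_ne_zero)
    fun x _ i j => ?_, fun k => hcomb (ha k) (ha₀ k) fun x hx i j => ?_⟩
  · refine totallyGeodesic_of_dsymForm_self_eq hU (hη1 m)
      (contDiffOn_coframeComb hη (hS m)).continuousOn fun x hx v => ?_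
    rw [hsymb x hx m v, coframeComb_dotProduct]
  · rw [crossLogDeriv_const X fun _ => 1, hswap i j]
    ring
  · obtain rfl | hij := eq_or_ne i j
    · simp [hdiag, crossLogDeriv]
    · have hs := h k x hx i j
      rw [sInv_eq_crossLogDeriv_div, div_eq_iff (sub_ne_zero.2 (hne k i j hij x hx))] at hs
      rw [hs, hswap i j]
      ring

theorem statement11_general (hU : IsOpen U) (hη : ∀ i, ContDiffOn ℝ (⊤ : ℕ∞) (η i) U)
    (hX : IsDualFrame U η X) (ha : ∀ k i, ContDiffOn ℝ (⊤ : ℕ∞) (a k i) U)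
    (ha₀ : ∀ k i, ∀ x ∈ U, a k i x ≠ 0)
    (hne : ∀ k i j, i ≠ j → ∀ x ∈ U, a k i x ≠ a k j x)
    {σ : (Fin n → ℝ) → Fin n → ℝ} (hσ : ∀ x ∈ U, ∀ m, σ x m = -∑ i, η i x m)
    {ω : κ → (Fin n → ℝ) → Fin n → ℝ} (hω : ∀ k, ∀ x ∈ U, ∀ m, ω k x m = -∑ i, a k i x * η i x m) :
    (∃ Γ, IsTorsionFreeConn U Γ ∧ (∀ i, TotallyGeodesic U Γ (η i)) ∧ TotallyGeodesic U Γ σ ∧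
        ∀ k, TotallyGeodesic U Γ (ω k)) ↔
      ∀ k l i j, i ≠ j → ∀ x ∈ U, sInv X (a k) i j x = sInv X (a l) i j x := by
  have hσ_iff : ∀ Γ, TotallyGeodesic U Γ σ ↔ TotallyGeodesic U Γ (coframeComb η fun _ _ => 1) :=
    fun Γ => totallyGeodesic_congr_neg fun x hx m => by simp [hσ x hx m, coframeComb]
  have hω_iff : ∀ Γ k, TotallyGeodesic U Γ (ω k) ↔ TotallyGeodesic U Γ (coframeComb η (a k)) :=
    fun Γ k => totallyGeodesic_congr_neg fun x hx m => by simp [hω k x hx m, coframeComb]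
  have ha1 : ∀ k i, ContDiffOn ℝ 1 (a k i) U := fun k i =>
    (ha k i).of_le (by exact_mod_cast le_top)
  simp only [hσ_iff, hω_iff]
  constructor
  · rintro ⟨Γ, ⟨hΓ, -⟩, hη_geod, hσ_geod, hω_geod⟩ k l i j hij x hx
    have hη1 : ∀ i, ContDiffOn ℝ 1 (η i) U := fun i => (hη i).of_le (by exact_mod_cast le_top)
    have hΓ1 : ∀ k i j, ContDiffOn ℝ 1 (Γ k i j) U := fun k i j =>
      (hΓ k i j).of_le (by exact_mod_cast le_top)
    obtain ⟨S, hS⟩ := hX.exists_hasGeodesicSymbols hx fun m _ =>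
      (hη_geod m).dsymForm_self_eq_zero hU hΓ1 (hη1 m) hx
    have hinv : ∀ k, sInv X (a k) i j x = S i j - S j j := fun k =>
      sInv_eq_of_totallyGeodesic hU hη1 hX (ha1 k) (ha₀ k) hΓ1 hσ_geod (hω_geod k) hx hS
        (hne k i j hij x hx)
    rw [hinv k, hinv l]
  · intro h
    obtain ⟨S, hS, hdiag, hswap, hinv⟩ := exists_alternating_eq_sInv hU hX.1 ha ha₀ hne h
    exact exists_isTorsionFreeConn_totallyGeodesic hU hη hX ha1 ha₀ hne hS hdiag hswap hinv

end GeodesicWebs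

/-- a normalized `d`-web (`d ≥ n+2`) of hypersurfaces is geodesic for some
torsion-free affine connection iff all its basic invariants agree:
`s^{aᵏ}_{ij} = s^{aˡ}_{ij}` for all `i ≠ j` and all `k, l`. -/
theorem statement11 {n d : ℕ} (hn : 2 ≤ n) (hd : n + 2 ≤ d)
    (U : Set (Fin n → ℝ)) (hU : IsOpen U) (hUconn : IsConnected U)
    (ωs : Fin d → (Fin n → ℝ) → Fin n → ℝ) (hweb : IsWeb U ωs)
    (X : Fin n → (Fin n → ℝ) → Fin n → ℝ)
    (hX : IsDualFrame U (fun i => ωs (Fin.castLE (by omega) i)) X)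
    (a : Fin (d - n - 1) → Fin n → (Fin n → ℝ) → ℝ)
    (hasm : ∀ k i, ContDiffOn ℝ (⊤ : ℕ∞) (a k i) U)
    (hanz : ∀ k i, ∀ x ∈ U, a k i x ≠ 0)
    (hane : ∀ k, ∀ i j, i ≠ j → ∀ x ∈ U, a k i x ≠ a k j x)
    (hnorm1 : ∀ x ∈ U, ∀ m, ωs (⟨n, by omega⟩ : Fin d) x m =
      -(∑ i : Fin n, ωs (Fin.castLE (by omega) i) x m))
    (hnorm2 : ∀ k : Fin (d - n - 1), ∀ x ∈ U, ∀ m,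
      ωs (⟨n + 1 + k.val, by have := k.isLt; omega⟩ : Fin d) x m =
        -(∑ i : Fin n, a k i x * ωs (Fin.castLE (by omega) i) x m)) :
    (∃ Γ : Fin n → Fin n → Fin n → (Fin n → ℝ) → ℝ,
        IsTorsionFreeConn U Γ ∧ ∀ i, TotallyGeodesic U Γ (ωs i)) ↔
      ∀ k l : Fin (d - n - 1), ∀ i j : Fin n, i ≠ j → ∀ x ∈ U,
        sInv X (a k) i j x = sInv X (a l) i j x :=
  (exists_congr fun _ => and_congr_right fun _ => forall_fin_iff_castLE_and_add (by omega)).trans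
    (statement11_general hU (fun i => (hweb.1 _).1) hX hasm hanz hane hnorm1 hnorm2)
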